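/- Let N be a natural number, let a_1, ..., a_N be distinct positive real numbers, and let A_1, ..., A_N be positive real numbers. Then every eigenvector f of the weighted Cauchy matrix C_{a,A} satisfies ⟨v_A, f⟩ ≠ 0; that is, v_A is not orthogonal to any eigenvector of C_{a,A}. -/

import Mathlib

/-!
Let `D = diag(a)`, `C = C_{a,A}` and `v = v_A`. The entries of `C` are chosen so that `C` solves the
Lyapunov equation `C D + D C = v v*`. Testing it on an eigenvector `C f = b f` gives
`2 Re(b) ⟨f, D f⟩ = |⟨v, f⟩|²`. Since `b` is real and `D` is positive definite, `⟨v, f⟩ = 0` would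
force `b = 0`.

It remains to see that `C` is injective. The same identity with `b = 0` shows that `ker C` is
orthogonal to `v`, and then the Lyapunov equation shows that `ker C` is `D`-invariant. So every
`g ∈ ker C` satisfies `⟨v, Dⁱ g⟩ = 0` for all `i`; as the `a_k` are distinct, the Vandermonde
determinant forces every `√A_k g_k` to vanish.
-/

open Matrix MeasureTheory
open scoped ComplexOrder

/-- The weighted Cauchy matrix `C_{a,A} = (√(A_j A_k)/(a_j + a_k))_{j,k}`, as a complex matrix. -/
noncomputable def cauchyMatrix {N : ℕ} (a A : Fin N → ℝ) : Matrix (Fin N) (Fin N) ℂ :=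
  Matrix.of fun j k => ((Real.sqrt (A j * A k) / (a j + a k) : ℝ) : ℂ)

/-- The vector `v_A = (√A_1, ..., √A_N)` in `ℂ^N`. -/
noncomputable def vecA {N : ℕ} (A : Fin N → ℝ) : Fin N → ℂ :=
  fun k => ((Real.sqrt (A k) : ℝ) : ℂ)

section Hermitian

variable {n R : Type*} [Fintype n] [CommRing R] [StarRing R] {C : Matrix n n R} {f : n → R} {b : R}

lemma star_dotProduct_mulVec_of_isHermitian (hC : C.IsHermitian) (g h : n → R) :
    star g ⬝ᵥ (C *ᵥ h) = star (C *ᵥ g) ⬝ᵥ h := by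
  rw [dotProduct_mulVec, star_mulVec, hC.eq]

lemma star_eigenvector_dotProduct_mulVec (hC : C.IsHermitian) (hf : C *ᵥ f = b • f) (g : n → R) :
    star f ⬝ᵥ (C *ᵥ g) = star b * (star f ⬝ᵥ g) := by
  rw [star_dotProduct_mulVec_of_isHermitian hC, hf, star_smul, smul_dotProduct, smul_eq_mul]

lemma star_eigenvalue_eq_self_of_isHermitian [PartialOrder R] [StarOrderedRing R] [NoZeroDivisors R]
    (hC : C.IsHermitian) (hf0 : f ≠ 0) (hf : C *ᵥ f = b • f) : star b = b := by
  have h : star b * (star f ⬝ᵥ f) = b * (star f ⬝ᵥ f) := by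
    rw [← star_eigenvector_dotProduct_mulVec hC hf, hf, dotProduct_smul, smul_eq_mul]
  exact mul_right_cancel₀ (dotProduct_star_self_pos_iff.2 hf0).ne' h

end Hermitian

section Observable

variable {n R : Type*} [Fintype n] [DecidableEq n] [CommRing R] [StarRing R]

/-- Kalman observability of the pair `(v*, D)`: a vector `g` is determined by the scalar
observations `⟨v, Dⁱ g⟩`, `i ∈ ℕ`. -/
def IsObservable (D : Matrix n n R) (v : n → R) : Prop :=
  ∀ ⦃g : n → R⦄, (∀ i : ℕ, star v ⬝ᵥ (D ^ i *ᵥ g) = 0) → g = 0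

lemma isObservable_diagonal [IsDomain R] {d v : n → R} (hd : Function.Injective d)
    (hv : ∀ k, v k ≠ 0) : IsObservable (diagonal d) v := by
  intro g hg
  let e := Fintype.equivFin n
  have h_vandermonde : (fun j => star (v (e.symm j)) * g (e.symm j)) = 0 := by
    refine eq_zero_of_forall_pow_sum_mul_pow_eq_zero (hd.comp e.symm.injective) fun i => ?_
    rw [← hg i, diagonal_pow, dotProduct, ← e.symm.sum_comp]
    refine Finset.sum_congr rfl fun j _ => ?_
    simp only [mulVec_diagonal, Pi.star_apply, Pi.pow_apply, Function.comp_apply]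
    ring
  ext k
  simpa [hv k] using congrFun h_vandermonde (e k)

end Observable

/-- The Hermitian matrix `C` solves the Lyapunov equation of `D` with right-hand side the rank-one
matrix `v v*`. -/
structure IsLyapunovSolution {n R : Type*} [Fintype n] [CommRing R] [StarRing R]
    (C D : Matrix n n R) (v : n → R) : Prop where
  isHermitian : C.IsHermitian
  lyapunov_eq : C * D + D * C = vecMulVec v (star v)

namespace IsLyapunovSolution

section CommRing

variable {n R : Type*} [Fintype n] [CommRing R] [StarRing R] {C D : Matrix n n R} {v : n → R}

lemma mulVec_add_mulVec (h : IsLyapunovSolution C D v) (g : n → R) :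
    C *ᵥ (D *ᵥ g) + D *ᵥ (C *ᵥ g) = (star v ⬝ᵥ g) • v := by
  rw [mulVec_mulVec, mulVec_mulVec, ← add_mulVec, h.lyapunov_eq, vecMulVec_mulVec,
    op_smul_eq_smul]

lemma eigenvector_identity (h : IsLyapunovSolution C D v) {f : n → R} {b : R}
    (hf : C *ᵥ f = b • f) :
    (star b + b) * (star f ⬝ᵥ (D *ᵥ f)) = (star v ⬝ᵥ f) * star (star v ⬝ᵥ f) :=
  calc (star b + b) * (star f ⬝ᵥ (D *ᵥ f))
      = star f ⬝ᵥ (C *ᵥ (D *ᵥ f) + D *ᵥ (C *ᵥ f)) := by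
        rw [dotProduct_add, star_eigenvector_dotProduct_mulVec h.isHermitian hf, hf, mulVec_smul,
          dotProduct_smul, smul_eq_mul, add_mul]
    _ = (star v ⬝ᵥ f) * star (star v ⬝ᵥ f) := by
        rw [h.mulVec_add_mulVec, dotProduct_smul, smul_eq_mul, star_dotProduct f v]

variable [NoZeroDivisors R]

lemma star_dotProduct_eq_zero_of_mulVec_eq_zero (h : IsLyapunovSolution C D v) {g : n → R}
    (hg : C *ᵥ g = 0) : star v ⬝ᵥ g = 0 := by
  have h_sq := h.eigenvector_identity (b := 0) (hg.trans (zero_smul R g).symm)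
  simpa using h_sq.symm

lemma mulVec_mulVec_eq_zero (h : IsLyapunovSolution C D v) {g : n → R} (hg : C *ᵥ g = 0) :
    C *ᵥ (D *ᵥ g) = 0 := by
  simpa [hg, h.star_dotProduct_eq_zero_of_mulVec_eq_zero hg] using h.mulVec_add_mulVec g

variable [DecidableEq n]

lemma mulVec_pow_mulVec_eq_zero (h : IsLyapunovSolution C D v) {g : n → R} (hg : C *ᵥ g = 0)
    (i : ℕ) : C *ᵥ (D ^ i *ᵥ g) = 0 := by
  induction i with
  | zero => rwa [pow_zero, one_mulVec]
  | succ i ih => rw [pow_succ', ← mulVec_mulVec, h.mulVec_mulVec_eq_zero ih]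

lemma eq_zero_of_mulVec_eq_zero (h : IsLyapunovSolution C D v) (hobs : IsObservable D v)
    {g : n → R} (hg : C *ᵥ g = 0) : g = 0 :=
  hobs fun i => h.star_dotProduct_eq_zero_of_mulVec_eq_zero (h.mulVec_pow_mulVec_eq_zero hg i)

end CommRing

theorem star_dotProduct_eigenvector_ne_zero {n 𝕜 : Type*} [Fintype n] [DecidableEq n] [RCLike 𝕜]
    {C D : Matrix n n 𝕜} {v : n → 𝕜} (h : IsLyapunovSolution C D v) (hD : D.PosDef)
    (hobs : IsObservable D v) {f : n → 𝕜} (hf0 : f ≠ 0) {b : 𝕜} (hf : C *ᵥ f = b • f) :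
    star v ⬝ᵥ f ≠ 0 := by
  intro hvf
  have h_energy : (b + b) * (star f ⬝ᵥ (D *ᵥ f)) = 0 := by
    simpa [hvf, star_eigenvalue_eq_self_of_isHermitian h.isHermitian hf0 hf]
      using h.eigenvector_identity hf
  have hb : b = 0 :=
    add_self_eq_zero.1 <|
      (mul_eq_zero.1 h_energy).resolve_right (hD.dotProduct_mulVec_pos hf0).ne'
  exact hf0 (h.eq_zero_of_mulVec_eq_zero hobs (by rw [hf, hb, zero_smul]))

end IsLyapunovSolution

section Cauchy

variable {N : ℕ}

lemma cauchyMatrix_isHermitian (a A : Fin N → ℝ) : (cauchyMatrix a A).IsHermitian := by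
  ext j k
  simp [cauchyMatrix, mul_comm (A j), add_comm (a j : ℂ)]

lemma star_vecA (A : Fin N → ℝ) : star (vecA A) = vecA A := by
  ext k
  simp [vecA]

lemma vecA_apply_ne_zero {A : Fin N → ℝ} {k : Fin N} (hA : 0 < A k) : vecA A k ≠ 0 :=
  Complex.ofReal_ne_zero.2 (Real.sqrt_pos.2 hA).ne'

lemma cauchyMatrix_apply_mul_add {a A : Fin N → ℝ} {j k : Fin N} (ha : a j + a k ≠ 0)
    (hA : 0 ≤ A j) : cauchyMatrix a A j k * (a j + a k) = vecA A j * vecA A k := by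
  simp only [cauchyMatrix, vecA, of_apply]
  exact_mod_cast (div_mul_cancel₀ _ ha).trans (Real.sqrt_mul hA (A k))

lemma cauchyMatrix_isLyapunovSolution {a A : Fin N → ℝ} (ha : ∀ j k, a j + a k ≠ 0)
    (hA : ∀ k, 0 ≤ A k) :
    IsLyapunovSolution (cauchyMatrix a A) (diagonal fun k => (a k : ℂ)) (vecA A) where
  isHermitian := cauchyMatrix_isHermitian a A
  lyapunov_eq := by
    ext j k
    rw [Matrix.add_apply, mul_diagonal, diagonal_mul, star_vecA, vecMulVec_apply,
      ← cauchyMatrix_apply_mul_add (ha j k) (hA j)]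
    ring

end Cauchy

/-- The vector `v_A` is not orthogonal to any eigenvector of `C_{a,A}`. -/
theorem cauchyMatrix_vecA_not_orthogonal (N : ℕ) (a A : Fin N → ℝ)
    (ha : Function.Injective a) (ha0 : ∀ k, 0 < a k) (hA : ∀ k, 0 < A k)
    (f : Fin N → ℂ) (hf0 : f ≠ 0) (b : ℂ)
    (hf : cauchyMatrix a A *ᵥ f = b • f) :
    vecA A ⬝ᵥ star f ≠ 0 := by
  have h_lyapunov : IsLyapunovSolution (cauchyMatrix a A) (diagonal fun k => (a k : ℂ)) (vecA A) :=
    cauchyMatrix_isLyapunovSolution (fun j k => (add_pos (ha0 j) (ha0 k)).ne') fun k => (hA k).le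
  have h_posDef : (diagonal fun k => (a k : ℂ)).PosDef :=
    PosDef.diagonal fun k => Complex.zero_lt_real.2 (ha0 k)
  have h_observable : IsObservable (diagonal fun k => (a k : ℂ)) (vecA A) :=
    isObservable_diagonal (Complex.ofReal_injective.comp ha) fun k => vecA_apply_ne_zero (hA k)
  rw [dotProduct_comm, star_dotProduct, star_ne_zero]
  exact h_lyapunov.star_dotProduct_eigenvector_ne_zero h_posDef h_observable hf0 hf
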